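/- There exists N₀ ∈ ℕ such that for all n ≥ N₀, all natural numbers t ≥ (1 + 4·log log n / log n)·(2n / log n), and every bitstring z : Fin n → Bool, the number of t-tuples (x¹,…,xᵗ) of bitstrings of length n for which there exists a bitstring y ≠ z with H(xⁱ,y) = H(xⁱ,z) for all i ∈ {1,…,t} is at most 2^{nt} · 2^{−t/2}. Equivalently, if x¹,…,xᵗ are chosen independently and uniformly at random from {0,1}^n, the probability that some y ≠ z satisfies H(xⁱ,y) = H(xⁱ,z) for all i is at most 2^{−t/2}. -/

import Mathlib

/-!
By the union bound over `y ≠ z`, the probability that some wrong target is consistent with all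
samples is at most `∑ y, p y ^ t`, where `p y` is the probability that a random `x` satisfies
`H(x, y) = H(x, z)`. Equality forces exactly half of the positions where `y` and `z` differ to
agree with `z` in `x`, so `p y = C(2k, k) / 4 ^ k` when `H(y, z) = 2k` and `p y = 0` when `H(y, z)`
is odd. From `C(2k, k) ^ 2 * (3k + 1) ≤ 16 ^ k` one gets both `p y ≤ 1 / 2` and
`p y ^ 2 ≤ 1 / H(y, z)`.

The sum is split at Hamming distance `r = 2n / (log n) ^ 3`. There are at most `n ^ (r + 1)` near
targets, each contributing at most `2 ^ (-t)`; each of the at most `2 ^ n` far ones contributes at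
most `r ^ (-t / 2)`. For large `n` each part is at most half of `2 ^ (-t / 2)`.
-/

theorem centralBinom_sq_mul_le (k : ℕ) : k.centralBinom ^ 2 * (3 * k + 1) ≤ 16 ^ k := by
  induction k with
  | zero => simp
  | succ k ih =>
    have step : 4 * (2 * k + 1) ^ 2 * (3 * (k + 1) + 1) ≤ 16 * (k + 1) ^ 2 * (3 * k + 1) := by
      nlinarith
    refine Nat.le_of_mul_le_mul_left ?_ (by positivity : 0 < (k + 1) ^ 2 * (3 * k + 1))
    calc (k + 1) ^ 2 * (3 * k + 1) * ((k + 1).centralBinom ^ 2 * (3 * (k + 1) + 1))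
        = ((k + 1) * (k + 1).centralBinom) ^ 2 * (3 * k + 1) * (3 * (k + 1) + 1) := by ring
      _ = k.centralBinom ^ 2 * (3 * k + 1) * (4 * (2 * k + 1) ^ 2 * (3 * (k + 1) + 1)) := by
        rw [Nat.succ_mul_centralBinom_succ]; ring
      _ ≤ 16 ^ k * (16 * (k + 1) ^ 2 * (3 * k + 1)) := Nat.mul_le_mul ih step
      _ = (k + 1) ^ 2 * (3 * k + 1) * 16 ^ (k + 1) := by ring

section Hamming

open Finset

variable {ι κ : Type*} [Fintype ι]

theorem hammingDist_add_two_mul_card (x y z : ι → Bool) :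
    hammingDist x y + 2 * #{i | x i ≠ z i ∧ y i ≠ z i} = hammingDist x z + hammingDist y z := by
  simp only [hammingDist, card_filter, mul_sum, ← sum_add_distrib]
  refine sum_congr rfl fun i _ => ?_
  cases x i <;> cases y i <;> cases z i <;> simp

theorem card_filter_card_le_le_pow (h : 2 ≤ Fintype.card ι) (m : ℕ) :
    #{s : Finset ι | #s ≤ m} ≤ Fintype.card ι ^ (m + 1) := by
  classical
  calc #{s : Finset ι | #s ≤ m}
      ≤ #((range (m + 1)).biUnion fun j => powersetCard j (univ : Finset ι)) :=
        card_le_card fun s hs => by simpa [Nat.lt_succ_iff] using hs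
    _ ≤ ∑ j ∈ range (m + 1), (Fintype.card ι).choose j :=
        card_biUnion_le.trans_eq <| by simp
    _ ≤ ∑ j ∈ range (m + 1), Fintype.card ι ^ j := by gcongr; exact Nat.choose_le_pow _ _
    _ ≤ Fintype.card ι ^ (m + 1) := (Nat.geomSum_lt h fun _ => mem_range.mp).le

variable [DecidableEq ι] [Fintype κ] [DecidableEq κ]

/-- Bitstrings correspond to subsets of `ι` through the positions where they differ from the
reference bitstring `z`. -/
def differenceEquiv (z : ι → Bool) : (ι → Bool) ≃ Finset ι where
  toFun x := {i | x i ≠ z i}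
  invFun s i := xor (z i) (decide (i ∈ s))
  left_inv x := by ext i; cases hx : x i <;> cases hz : z i <;> simp [hx, hz]
  right_inv s := by ext i; cases hz : z i <;> simp [hz]

theorem card_filter_card_inter_eq (s : Finset ι) (k : ℕ) :
    #{a : Finset ι | #(a ∩ s) = k} = (#s).choose k * 2 ^ (Fintype.card ι - #s) := by
  rw [← card_compl, ← card_powerset, ← card_powersetCard, ← card_product]
  refine card_nbij' (fun a => (a ∩ s, a \ s)) (fun p => p.1 ∪ p.2) ?_ ?_ ?_ ?_
  · intro a ha
    simp only [coe_filter, mem_univ, true_and, Set.mem_ofPred_eq] at ha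
    simp [mem_powersetCard, ha, subset_iff]
  · rintro ⟨a, b⟩ h
    simp only [coe_product, Set.mem_prod, mem_coe, mem_powersetCard, mem_powerset] at h
    have union_inter : (a ∪ b) ∩ s = a := by grind [mem_compl]
    simp [union_inter, h]
  · exact fun a _ => sup_inf_sdiff a s
  · rintro ⟨a, b⟩ h
    simp only [coe_product, Set.mem_prod, mem_coe, mem_powersetCard, mem_powerset] at h
    ext <;> grind [mem_compl]

theorem card_hammingBall_le (h : 2 ≤ Fintype.card ι) (z : ι → Bool) (m : ℕ) :
    #{y : ι → Bool | hammingDist y z ≤ m} ≤ Fintype.card ι ^ (m + 1) := by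
  refine (card_equiv (differenceEquiv z) fun y => ?_).trans_le (card_filter_card_le_le_pow h m)
  simp [differenceEquiv, hammingDist]

/-- The bitstrings `x` with `H(x, y) = H(x, z)`: those that cannot distinguish the OneMax
targets `y` and `z`. -/
def equidistantSet (y z : ι → Bool) : Finset (ι → Bool) :=
  {x | hammingDist x y = hammingDist x z}

theorem mem_equidistantSet_iff {x y z : ι → Bool} :
    x ∈ equidistantSet y z ↔ 2 * #{i | x i ≠ z i ∧ y i ≠ z i} = hammingDist y z := by
  have double_count := hammingDist_add_two_mul_card x y z
  simp only [equidistantSet, mem_filter_univ]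
  lia

theorem card_equidistantSet {y z : ι → Bool} {k : ℕ} (h : hammingDist y z = 2 * k) :
    #(equidistantSet y z) = k.centralBinom * 2 ^ (Fintype.card ι - 2 * k) := by
  rw [Nat.centralBinom, ← h]
  refine (card_equiv (differenceEquiv z) fun x => ?_).trans
    (card_filter_card_inter_eq (differenceEquiv z y) k)
  simp [mem_equidistantSet_iff, h, differenceEquiv, ← filter_and]

theorem equidistantSet_eq_empty {y z : ι → Bool} (h : ¬ Even (hammingDist y z)) :
    equidistantSet y z = ∅ :=
  eq_empty_of_forall_notMem fun _ hx =>
    h <| even_iff_two_dvd.mpr ⟨_, (mem_equidistantSet_iff.mp hx).symm⟩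

/-- The probability that a uniformly random bitstring is equidistant from `y` and `z`. -/
noncomputable def equidistantProb (y z : ι → Bool) : ℝ :=
  #(equidistantSet y z) / 2 ^ Fintype.card ι

theorem equidistantProb_nonneg (y z : ι → Bool) : 0 ≤ equidistantProb y z := by
  unfold equidistantProb; positivity

theorem equidistantProb_of_hammingDist_eq {y z : ι → Bool} {k : ℕ} (h : hammingDist y z = 2 * k) :
    equidistantProb y z = k.centralBinom / 4 ^ k := by
  have hk : 2 * k ≤ Fintype.card ι := h ▸ hammingDist_le_card_fintype
  rw [equidistantProb, card_equidistantSet h, div_eq_div_iff (by positivity) (by positivity)]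
  have four_pow : (4 : ℝ) ^ k = 2 ^ (2 * k) := by rw [pow_mul]; norm_num
  rw [four_pow, ← pow_sub_mul_pow (2 : ℝ) hk]
  push_cast
  ring

theorem equidistantProb_sq_le (y z : ι → Bool) :
    equidistantProb y z ^ 2 ≤ 1 / (3 / 2 * hammingDist y z + 1) := by
  by_cases h : Even (hammingDist y z)
  · obtain ⟨k, hk⟩ := even_iff_exists_two_mul.mp h
    rw [equidistantProb_of_hammingDist_eq hk, hk, div_pow,
      div_le_div_iff₀ (by positivity) (by positivity)]
    calc (k.centralBinom : ℝ) ^ 2 * (3 / 2 * (2 * k : ℕ) + 1)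
        = k.centralBinom ^ 2 * (3 * k + 1) := by push_cast; ring
      _ ≤ 16 ^ k := mod_cast centralBinom_sq_mul_le k
      _ = 1 * (4 ^ k) ^ 2 := by rw [one_mul, pow_right_comm]; norm_num
  · simp only [equidistantProb, equidistantSet_eq_empty h, card_empty, Nat.cast_zero, zero_div,
      zero_pow two_ne_zero]
    positivity

theorem equidistantProb_le_half {y z : ι → Bool} (hyz : y ≠ z) : equidistantProb y z ≤ 1 / 2 := by
  by_cases h : Even (hammingDist y z)
  · have hpos := hammingDist_pos.mpr hyz
    have h2 : (2 : ℝ) ≤ hammingDist y z := mod_cast Nat.le_of_dvd hpos h.two_dvd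
    refine le_of_sq_le_sq ?_ (by norm_num)
    calc equidistantProb y z ^ 2 ≤ 1 / (3 / 2 * hammingDist y z + 1) := equidistantProb_sq_le y z
      _ ≤ 1 / (3 / 2 * 2 + 1) := by gcongr
      _ = (1 / 2) ^ 2 := by norm_num
  · simp [equidistantProb, equidistantSet_eq_empty h]

theorem card_exists_forall_equidistant_le (z : ι → Bool) :
    (#{x : κ → ι → Bool | ∃ y, y ≠ z ∧ ∀ i, hammingDist (x i) y = hammingDist (x i) z} : ℝ) ≤
      2 ^ (Fintype.card ι * Fintype.card κ) *
        ∑ y with y ≠ z, equidistantProb y z ^ Fintype.card κ := by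
  have union_bound :
      #{x : κ → ι → Bool | ∃ y, y ≠ z ∧ ∀ i, hammingDist (x i) y = hammingDist (x i) z} ≤
        ∑ y with y ≠ z, #(equidistantSet y z) ^ Fintype.card κ := by
    calc _ ≤ #((univ.filter (· ≠ z)).biUnion fun y =>
          Fintype.piFinset fun _ : κ => equidistantSet y z) :=
        card_le_card fun x hx => by simpa [equidistantSet] using hx
      _ ≤ _ := card_biUnion_le.trans_eq <| by simp [Fintype.card_piFinset]
  calc _ ≤ ((∑ y with y ≠ z, #(equidistantSet y z) ^ Fintype.card κ : ℕ) : ℝ) :=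
        mod_cast union_bound
    _ = _ := by
      simp only [equidistantProb, div_pow, pow_mul, mul_sum, Nat.cast_sum, Nat.cast_pow]
      exact sum_congr rfl fun y _ => (mul_div_cancel₀ _ (by positivity)).symm

theorem equidistantProb_pow_le {y z : ι → Bool} {r : ℝ} (hr : 0 < r) (h : r ≤ hammingDist y z)
    (t : ℕ) : equidistantProb y z ^ t ≤ r ^ (-(t / 2 : ℝ)) := by
  have hq := equidistantProb_nonneg y z
  have sq_le : equidistantProb y z ^ 2 ≤ r⁻¹ := by
    refine (equidistantProb_sq_le y z).trans ?_
    rw [one_div]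
    gcongr
    linarith
  calc equidistantProb y z ^ t = (equidistantProb y z ^ 2) ^ (t / 2 : ℝ) := by
        rw [← Real.rpow_natCast_mul hq, ← Real.rpow_natCast]
        congr 1; push_cast; ring
    _ ≤ r⁻¹ ^ (t / 2 : ℝ) := by gcongr
    _ = r ^ (-(t / 2 : ℝ)) := by rw [Real.inv_rpow hr.le, Real.rpow_neg hr.le]

theorem sum_near_equidistantProb_pow_le (hι : 2 ≤ Fintype.card ι) (z : ι → Bool) {r : ℝ}
    (hr : 0 ≤ r) (t : ℕ) :
    ∑ y with y ≠ z ∧ hammingDist y z ≤ ⌊r⌋₊, equidistantProb y z ^ t ≤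
      (Fintype.card ι : ℝ) ^ (r + 1) * (1 / 2) ^ t := by
  have card_le : (#{y | y ≠ z ∧ hammingDist y z ≤ ⌊r⌋₊} : ℝ) ≤ Fintype.card ι ^ (r + 1) :=
    calc (#{y | y ≠ z ∧ hammingDist y z ≤ ⌊r⌋₊} : ℝ)
        ≤ #{y : ι → Bool | hammingDist y z ≤ ⌊r⌋₊} :=
          mod_cast card_le_card (monotone_filter_right _ fun _ _ => And.right)
      _ ≤ (Fintype.card ι : ℝ) ^ ((⌊r⌋₊ + 1 : ℕ) : ℝ) := by
          exact_mod_cast card_hammingBall_le hι z ⌊r⌋₊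
      _ ≤ Fintype.card ι ^ (r + 1) := by
          push_cast
          gcongr
          · exact_mod_cast one_le_two.trans hι
          · exact Nat.floor_le hr
  calc ∑ y with y ≠ z ∧ hammingDist y z ≤ ⌊r⌋₊, equidistantProb y z ^ t
      ≤ #{y | y ≠ z ∧ hammingDist y z ≤ ⌊r⌋₊} • (1 / 2) ^ t :=
        sum_le_card_nsmul _ _ _ fun y hy => pow_le_pow_left₀ (equidistantProb_nonneg y z)
          (equidistantProb_le_half (mem_filter.mp hy).2.1) t
    _ ≤ (Fintype.card ι : ℝ) ^ (r + 1) * (1 / 2) ^ t := by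
        rw [nsmul_eq_mul]
        gcongr

theorem sum_far_equidistantProb_pow_le (z : ι → Bool) {r : ℝ} (hr : 0 < r) (t : ℕ) :
    ∑ y with y ≠ z ∧ ¬ hammingDist y z ≤ ⌊r⌋₊, equidistantProb y z ^ t ≤
      2 ^ Fintype.card ι * r ^ (-(t / 2 : ℝ)) := by
  calc ∑ y with y ≠ z ∧ ¬ hammingDist y z ≤ ⌊r⌋₊, equidistantProb y z ^ t
      ≤ #{y | y ≠ z ∧ ¬ hammingDist y z ≤ ⌊r⌋₊} • r ^ (-(t / 2 : ℝ)) :=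
        sum_le_card_nsmul _ _ _ fun y hy => equidistantProb_pow_le hr
          (Nat.lt_of_floor_lt (not_le.mp (mem_filter.mp hy).2.2)).le t
    _ ≤ 2 ^ Fintype.card ι * r ^ (-(t / 2 : ℝ)) := by
        rw [nsmul_eq_mul]
        gcongr
        exact_mod_cast (card_le_univ _).trans_eq (by simp)

theorem sum_equidistantProb_pow_le (hι : 2 ≤ Fintype.card ι) (z : ι → Bool) {r : ℝ} (hr : 0 < r)
    (t : ℕ) :
    ∑ y with y ≠ z, equidistantProb y z ^ t ≤
      (Fintype.card ι : ℝ) ^ (r + 1) * (1 / 2) ^ t +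
        2 ^ Fintype.card ι * r ^ (-(t / 2 : ℝ)) := by
  rw [← sum_filter_add_sum_filter_not _ fun y => hammingDist y z ≤ ⌊r⌋₊, filter_filter,
    filter_filter]
  exact add_le_add (sum_near_equidistantProb_pow_le hι z hr.le t)
    (sum_far_equidistantProb_pow_le z hr t)

end Hamming

section Asymptotics

open Real Filter

theorem eventually_const_mul_logb_pow_le (b c : ℝ) (k : ℕ) :
    ∀ᶠ x : ℝ in atTop, c * logb b x ^ k ≤ x := by
  filter_upwards [(isLittleO_pow_logb_id_atTop.const_mul_left c).bound one_pos,
    eventually_ge_atTop 0] with x bound hx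
  rw [one_mul, id, norm_of_nonneg hx] at bound
  exact (le_norm_self _).trans bound

theorem eventually_logb_bounds :
    ∀ᶠ x : ℝ in atTop, 1 ≤ logb 2 (logb 2 x) ∧ 24 * logb 2 (logb 2 x) ≤ logb 2 x ∧
      2 * logb 2 x * (logb 2 x + 1) ≤ x := by
  have hlog : Tendsto (logb 2) atTop atTop := tendsto_logb_atTop one_lt_two
  filter_upwards [(hlog.comp hlog).eventually_ge_atTop 1, hlog.eventually_ge_atTop 1,
    hlog.eventually (eventually_const_mul_logb_pow_le 2 24 1),
    eventually_const_mul_logb_pow_le 2 4 2] with x hll hl hll_le hsq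
  exact ⟨hll, by simpa using hll_le, by nlinarith⟩

theorem two_mul_div_logb_pow_three {x : ℝ} (hx : 0 < x) (hL : 0 < logb 2 x) :
    2 * x / logb 2 x ^ 3 = 2 ^ (1 + logb 2 x - 3 * logb 2 (logb 2 x)) := by
  rw [rpow_sub two_pos, rpow_add two_pos, rpow_one, rpow_logb two_pos (by norm_num) hx,
    mul_comm 3, rpow_mul two_pos.le, rpow_logb two_pos (by norm_num) hL]
  norm_cast

theorem near_exponent_le {x L T : ℝ} (hL : 4 ≤ L) (hLx : 2 * L * (L + 1) ≤ x) (hT : x / L ≤ T) :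
    L * (2 * x / L ^ 3 + 1) + 1 ≤ T := by
  have hx : 0 ≤ x := le_trans (by positivity) hLx
  have first_half : 2 * x / L ^ 2 ≤ x / L / 2 := by
    rw [div_div, div_le_div_iff₀ (by positivity) (by positivity)]
    nlinarith [mul_nonneg (mul_nonneg hx (by linarith : 0 ≤ L)) (sub_nonneg.mpr hL)]
  have second_half : L + 1 ≤ x / L / 2 := by
    rw [div_div, le_div_iff₀ (by positivity)]
    linarith
  calc L * (2 * x / L ^ 3 + 1) + 1 = 2 * x / L ^ 2 + (L + 1) := by field_simp; ring
    _ ≤ T := by linarith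

theorem far_exponent_le {x L l T : ℝ} (hl : 1 ≤ l) (hlL : 24 * l ≤ L) (hLx : 2 * L ≤ x)
    (hT : (1 + 4 * l / L) * (x / L) ≤ T) : x + 1 ≤ (L - 3 * l) * T := by
  have hL : 0 < L := by linarith
  have surplus : 1 ≤ x * (l * (L - 12 * l)) / L ^ 2 := by
    rw [le_div_iff₀ (by positivity)]
    calc 1 * L ^ 2 = 2 * L * (1 * (L / 2)) := by ring
      _ ≤ x * (l * (L - 12 * l)) := by gcongr <;> linarith
  calc x + 1 ≤ x + x * (l * (L - 12 * l)) / L ^ 2 := by gcongr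
    _ = (L - 3 * l) * ((1 + 4 * l / L) * (x / L)) := by field_simp; ring
    _ ≤ (L - 3 * l) * T := by gcongr; linarith

theorem near_contribution_le {x r : ℝ} {t : ℕ} (hx : 0 < x)
    (h : logb 2 x * (r + 1) + 1 ≤ t / 2) :
    x ^ (r + 1) * (1 / 2) ^ t ≤ 2 ^ (-(t / 2 : ℝ)) / 2 := by
  calc x ^ (r + 1) * (1 / 2) ^ t = 2 ^ (logb 2 x * (r + 1) - t) := by
        rw [rpow_sub two_pos, rpow_mul two_pos.le, rpow_logb two_pos (by norm_num) hx,
          rpow_natCast, one_div, inv_pow, div_eq_mul_inv]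
    _ ≤ 2 ^ (-(t / 2 : ℝ) - 1) := rpow_le_rpow_of_exponent_le one_le_two (by linarith)
    _ = 2 ^ (-(t / 2 : ℝ)) / 2 := rpow_sub_one two_ne_zero _

theorem far_contribution_le {x e T : ℝ} (h : x + 1 ≤ e * T) :
    2 ^ x * (2 ^ (1 + e)) ^ (-T) ≤ (2 : ℝ) ^ (-T) / 2 := by
  calc 2 ^ x * (2 ^ (1 + e)) ^ (-T) = (2 : ℝ) ^ (x + (1 + e) * -T) := by
        rw [← rpow_mul two_pos.le, rpow_add two_pos]
    _ ≤ 2 ^ (-T - 1) := rpow_le_rpow_of_exponent_le one_le_two (by linarith)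
    _ = 2 ^ (-T) / 2 := rpow_sub_one two_ne_zero _

theorem near_add_far_contribution_le {x : ℝ} {t : ℕ} (hll : 1 ≤ logb 2 (logb 2 x))
    (hlL : 24 * logb 2 (logb 2 x) ≤ logb 2 x) (hLx : 2 * logb 2 x * (logb 2 x + 1) ≤ x)
    (ht : (1 + 4 * logb 2 (logb 2 x) / logb 2 x) * (2 * x / logb 2 x) ≤ t) :
    x ^ (2 * x / logb 2 x ^ 3 + 1) * (1 / 2) ^ t +
      2 ^ x * (2 * x / logb 2 x ^ 3) ^ (-(t / 2 : ℝ)) ≤ 2 ^ (-(t / 2 : ℝ)) := by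
  have hL : 4 ≤ logb 2 x := by linarith
  have hx : 0 < x := lt_of_lt_of_le (by positivity) hLx
  have ht_half : (1 + 4 * logb 2 (logb 2 x) / logb 2 x) * (x / logb 2 x) ≤ t / 2 := by
    rw [le_div_iff₀ two_pos]
    exact le_of_eq_of_le (by ring) ht
  have near := near_contribution_le hx <| near_exponent_le hL hLx <|
    le_trans (le_mul_of_one_le_left (by positivity) (le_add_of_nonneg_right (by positivity)))
      ht_half
  have far := far_contribution_le <| far_exponent_le hll hlL (by nlinarith) ht_half
  rw [← add_sub_assoc, ← two_mul_div_logb_pow_three hx (by linarith)] at far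
  linarith

end Asymptotics

/-- Theorem 5 of the paper (counting version): for sufficiently large `n`,
`t ≥ (1 + 4 log log n / log n)(2n / log n)` and any target `z`, the number of
`t`-tuples of bitstrings for which some `y ≠ z` satisfies
`H(xⁱ,y) = H(xⁱ,z)` for all `i` is at most `2^{nt} · 2^{-t/2}`; i.e. the
probability (under `t` independent uniform samples) that some wrong OneMax
target is consistent with all samples is at most `2^{-t/2}`. -/
theorem stmt_9 :
    ∃ N₀ : ℕ, ∀ n : ℕ, n ≥ N₀ →
      ∀ t : ℕ,
        (t : ℝ) ≥ (1 + 4 * Real.logb 2 (Real.logb 2 n) / Real.logb 2 n) *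
              (2 * n / Real.logb 2 n) →
        ∀ z : Fin n → Bool,
          ((Finset.univ.filter fun x : Fin t → (Fin n → Bool) =>
              ∃ y : Fin n → Bool, y ≠ z ∧
                ∀ i : Fin t, hammingDist (x i) y = hammingDist (x i) z).card : ℝ) ≤
            (2 : ℝ) ^ (n * t) * (2 : ℝ) ^ (-((t : ℝ) / 2)) := by
  obtain ⟨N, hN⟩ := Filter.eventually_atTop.mp <|
    eventually_logb_bounds.and (Filter.eventually_ge_atTop 2) |>.natCast_atTop
  refine ⟨N, fun n hn t ht z => ?_⟩
  obtain ⟨⟨hll, hlL, hLn⟩, two_le_n⟩ := hN n hn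
  have hL : 0 < Real.logb 2 n := by linarith
  have hr : 0 < 2 * n / Real.logb 2 n ^ 3 := by positivity
  have sum_le := sum_equidistantProb_pow_le
    (by rw [Fintype.card_fin]; exact_mod_cast two_le_n) z hr t
  rw [Fintype.card_fin, ← Real.rpow_natCast 2 n] at sum_le
  calc _ ≤ (2 : ℝ) ^ (n * t) * ∑ y with y ≠ z, equidistantProb y z ^ t := by
        simpa using card_exists_forall_equidistant_le (κ := Fin t) z
    _ ≤ (2 : ℝ) ^ (n * t) * 2 ^ (-((t : ℝ) / 2)) := by
        gcongr
        exact sum_le.trans (near_add_far_contribution_le hll hlL hLn ht)
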